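/- arXiv:2508.04336 — 4 statements merged into one kernel-verified Lean document; each statement's English description precedes it below -/
import Mathlib

section
/- Let k be an algebraically closed field of characteristic 0, let n ≥ 2 and d ≥ 2, and let F₁, F₂ ∈ k[x₀,…,x_{n+1}] be smooth homogeneous polynomials of degree d. If the polynomials x_{n+2}^d − F₁ and x_{n+2}^d − F₂ in k[x₀,…,x_{n+2}] are projectively equivalent, then F₁ and F₂ are projectively equivalent. -/
open MvPolynomial

/-- `substMatrix g F` is the polynomial `F(g·x)`, obtained from `F` by the linear
substitution `xᵢ ↦ ∑ⱼ gᵢⱼ xⱼ`. -/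
noncomputable def substMatrix {k : Type*} [CommRing k] {N : ℕ}
    (g : Matrix (Fin N) (Fin N) k) (F : MvPolynomial (Fin N) k) : MvPolynomial (Fin N) k :=
  MvPolynomial.aeval (fun i => ∑ j, MvPolynomial.C (g i j) * MvPolynomial.X j) F

/-- Two polynomials `F, F'` in `N` variables are projectively equivalent if
`F(g·x) = c • F'` for some `g ∈ GL_N(k)` and `c ∈ kˣ`. -/
def ProjectivelyEquivalent {k : Type*} [CommRing k] {N : ℕ}
    (F F' : MvPolynomial (Fin N) k) : Prop :=
  ∃ g : GL (Fin N) k, ∃ c : kˣ,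
    substMatrix (g : Matrix (Fin N) (Fin N) k) F = (c : k) • F'

/-- A polynomial is smooth if the only common zero of its partial derivatives is the origin. -/
def SmoothPoly {k : Type*} [CommRing k] {N : ℕ} (F : MvPolynomial (Fin N) k) : Prop :=
  ∀ x : Fin N → k, (∀ i, MvPolynomial.eval x (MvPolynomial.pderiv i F) = 0) → x = 0

theorem eval_smul_aux {k : Type*} [CommRing k] {N d : ℕ}
    (F : MvPolynomial (Fin N) k) (hF : F.IsHomogeneous d) (t : k) (x : Fin N → k) :
    MvPolynomial.eval (fun i => t * x i) F = t ^ d * MvPolynomial.eval x F := by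
  rw [eval_eq', eval_eq', Finset.mul_sum]
  refine Finset.sum_congr rfl fun m hm => ?_
  have h1 : ∑ i, m i = d := by
    have := hF (mem_support_iff.mp hm)
    rw [Finsupp.weight_apply, Finsupp.sum_fintype _ _ (by simp)] at this
    simpa using this
  simp only [mul_pow, Finset.prod_mul_distrib, Finset.prod_pow_eq_pow_sum, h1]
  ring

theorem eval_substMatrix_aux {k : Type*} [CommRing k] {N : ℕ}
    (g : Matrix (Fin N) (Fin N) k) (F : MvPolynomial (Fin N) k) (x : Fin N → k) :
    MvPolynomial.eval x (substMatrix g F) = MvPolynomial.eval (g.mulVec x) F := by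
  unfold substMatrix
  induction F using MvPolynomial.induction_on with
  | C a => simp
  | add p q hp hq => simp only [map_add, hp, hq]
  | mul_X p i hp =>
    simp only [map_mul, hp, aeval_X, eval_X]
    simp [Matrix.mulVec, dotProduct]

theorem root_choice_aux {k : Type*} [Field k] [IsAlgClosed k] [CharZero k]
    (d : ℕ) (hd : 2 ≤ d) (c a y : k) (hc : c ≠ 0) (h2 : d = 2 → a = c * y) :
    ∃ z : k, z ^ d = c ∧ z ≠ a ∧ z * y ≠ 1 := by
  obtain ⟨z, hz⟩ := IsAlgClosed.exists_pow_nat_eq c (show 0 < d by omega)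
  have hz0 : z ≠ 0 := by
    rintro rfl
    rw [zero_pow (by omega)] at hz
    exact hc hz.symm
  rcases Nat.eq_or_lt_of_le hd with h | h
  · subst h
    have ha := h2 rfl
    by_contra hcon
    push Not at hcon
    have h1 := hcon z hz
    have h3 := hcon (-z) (by rw [neg_sq, hz])
    have e2 : (2 : k) ≠ 0 := two_ne_zero
    have hne : -z ≠ z := by
      intro h
      apply hz0
      have : 2 * z = 0 := by linear_combination -h
      exact (mul_eq_zero.mp this).resolve_left e2
    have key : ∀ w : k, w ^ 2 = c → w * y = 1 → w = a := by
      intro w hw hy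
      rw [ha, ← hw]
      linear_combination -w * hy
    have k1 : z = a := by
      by_contra hh
      exact hh (key z hz (h1 hh))
    have k2 : -z = a := by
      by_contra hh
      exact hh (key (-z) (by rw [neg_sq, hz]) (h3 hh))
    exact hne (k2.trans k1.symm)
  · have : NeZero (d : k) := ⟨by exact_mod_cast (show d ≠ 0 by omega)⟩
    obtain ⟨η, hη⟩ := HasEnoughRootsOfUnity.exists_primitiveRoot k d
    have hη0 : η ≠ 0 := hη.ne_zero (by omega)
    have n1 : η ≠ 1 := hη.ne_one (by omega)
    have n2 : η ^ 2 ≠ 1 := hη.pow_ne_one_of_pos_of_lt (by omega) (by omega)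
    have r1 : (z * η) ^ d = c := by rw [mul_pow, hz, hη.pow_eq_one, mul_one]
    have r2 : (z * η ^ 2) ^ d = c := by
      rw [mul_pow, hz, ← pow_mul, mul_comm 2 d, pow_mul, hη.pow_eq_one, one_pow, mul_one]
    have d1 : z * η ≠ z := fun h => n1 (mul_left_cancel₀ hz0 (by rw [h, mul_one]))
    have d2 : z * η ^ 2 ≠ z := fun h => n2 (mul_left_cancel₀ hz0 (by rw [h, mul_one]))
    have d3 : z * η ^ 2 ≠ z * η := fun h => n1 (by
      have := mul_left_cancel₀ hz0 h
      exact mul_left_cancel₀ hη0 (by rw [← sq, this, mul_one]))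
    have key : ∀ u v : k, u * y = 1 → v * y = 1 → u = v := by
      intro u v hu hv
      have hy : y ≠ 0 := by rintro rfl; simp at hu
      exact mul_right_cancel₀ hy (hu.trans hv.symm)
    by_contra hcon
    push Not at hcon
    have h0 := hcon _ hz
    have h1 := hcon _ r1
    have h2 := hcon _ r2
    by_cases q0 : z = a
    · exact d3 (key _ _ (h2 (fun h => d2 (h.trans q0.symm))) (h1 (fun h => d1 (h.trans q0.symm))))
    · by_cases q1 : z * η = a
      · exact d2 (key _ _ (h2 (fun h => d3 (h.trans q1.symm))) (h0 q0))
      · exact d1 (key _ _ (h1 q1) (h0 q0))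

/-- If the cyclic covers `x_{n+2}^d − F₁` and `x_{n+2}^d − F₂` of two smooth degree-`d`
forms `F₁, F₂` in `x₀, …, x_{n+1}` are projectively equivalent, then so are `F₁` and `F₂`. -/
theorem cyclic_cover_determines_hypersurface
    {k : Type*} [Field k] [IsAlgClosed k] [CharZero k]
    (n d : ℕ) (hn : 2 ≤ n) (hd : 2 ≤ d)
    (F₁ F₂ : MvPolynomial (Fin (n + 2)) k)
    (hF₁ : F₁.IsHomogeneous d) (hF₂ : F₂.IsHomogeneous d)
    (hs₁ : SmoothPoly F₁) (hs₂ : SmoothPoly F₂)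
    (H : ProjectivelyEquivalent
      (MvPolynomial.X (Fin.last (n + 2)) ^ d -
        MvPolynomial.rename Fin.castSucc F₁)
      (MvPolynomial.X (Fin.last (n + 2)) ^ d -
        MvPolynomial.rename Fin.castSucc F₂)) :
    ProjectivelyEquivalent F₁ F₂ := by
  obtain ⟨g, c, h⟩ := H
  set M : Matrix (Fin (n + 2 + 1)) (Fin (n + 2 + 1)) k := g.val with hM
  have hfun : ∀ v : Fin (n + 2 + 1) → k,
      (M.mulVec v (Fin.last _)) ^ d - eval (fun i => M.mulVec v (Fin.castSucc i)) F₁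
        = c * ((v (Fin.last _)) ^ d - eval (fun i => v (Fin.castSucc i)) F₂) := by
    intro v
    have := congrArg (eval v) h
    rw [eval_substMatrix_aux] at this
    simpa [eval_rename, smul_eval, Function.comp_def] using this
  have hMdet : IsUnit M.det := (Matrix.isUnit_iff_isUnit_det M).mp g.isUnit
  have hinj : Function.Injective M.mulVec :=
    Matrix.mulVec_injective_iff_isUnit.mpr g.isUnit
  set e : Fin (n + 2 + 1) → k := Pi.single (Fin.last _) 1 with he
  set w : Fin (n + 2 + 1) → k := M⁻¹.mulVec e with hw
  have hMw : M.mulVec w = e := by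
    rw [hw, Matrix.mulVec_mulVec, Matrix.mul_nonsing_inv _ hMdet, Matrix.one_mulVec]
  set a : k := M (Fin.last _) (Fin.last _) with ha
  set y₀ : k := w (Fin.last _) with hy₀
  have hMe : ∀ i, M.mulVec e i = M i (Fin.last _) := by
    intro i; simp [he]
  have hlast : e (Fin.last _) = 1 := by simp [he]
  have hcs : ∀ i : Fin (n + 2), e (Fin.castSucc i) = 0 := by
    intro i; simp [he]
  have h2 : d = 2 → a = c * y₀ := by
    rintro rfl
    have ht : ∀ t : k, (a + t) ^ 2 - eval (fun i => M (Fin.castSucc i) (Fin.last _)) F₁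
        = c * ((1 + t * y₀) ^ 2 - t ^ 2 * eval (fun i => w (Fin.castSucc i)) F₂) := by
      intro t
      have := hfun (e + t • w)
      rw [Matrix.mulVec_add, Matrix.mulVec_smul, hMw] at this
      simp only [Pi.add_apply, Pi.smul_apply, hMe, hlast, hcs, smul_eq_mul, mul_one, mul_zero,
        add_zero, zero_add] at this
      rw [← eval_smul_aux F₂ hF₂ t]
      exact this
    have p1 := ht 1
    have p2 := ht (-1)
    have h4 : (4 : k) ≠ 0 := by norm_num
    apply mul_left_cancel₀ h4
    linear_combination p1 - p2
  obtain ⟨z, hz, hza, hzy⟩ := root_choice_aux d hd (c : k) a y₀ c.ne_zero h2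
  have hza' : z - a ≠ 0 := sub_ne_zero.mpr hza
  set μ : k := (z - a)⁻¹ with hμ
  have hμ0 : μ ≠ 0 := inv_ne_zero hza'
  have hμ1 : 1 + a * μ = z * μ := by
    have : (z - a) * μ = 1 := mul_inv_cancel₀ hza'
    linear_combination -this
  let B : Matrix (Fin (n + 2)) (Fin (n + 2)) k := fun i j =>
    M (Fin.castSucc i) (Fin.castSucc j)
      + μ * M (Fin.castSucc i) (Fin.last _) * M (Fin.last _) (Fin.castSucc j)
  let l : (Fin (n + 2) → k) → k := fun x => ∑ j, M (Fin.last _) (Fin.castSucc j) * x j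
  let S : (Fin (n + 2) → k) → (Fin (n + 2 + 1) → k) := fun x => Fin.snoc x (μ * l x)
  have hSl : ∀ x, S x (Fin.last _) = μ * l x := fun x => by simp [S]
  have hSc : ∀ x (i : Fin (n + 2)), S x (Fin.castSucc i) = x i := fun x i => by simp [S]
  have hMl : ∀ x, M.mulVec (S x) (Fin.last _) = z * μ * l x := by
    intro x
    rw [← hμ1]
    simp only [Matrix.mulVec, dotProduct]
    rw [Fin.sum_univ_castSucc]
    simp only [hSl, hSc]
    change l x + a * (μ * l x) = _
    ring
  have hMc : ∀ x (i : Fin (n + 2)), M.mulVec (S x) (Fin.castSucc i) = B.mulVec x i := by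
    intro x i
    simp only [Matrix.mulVec, dotProduct]
    rw [Fin.sum_univ_castSucc]
    simp only [hSl, hSc, B, l, add_mul, Finset.sum_add_distrib, Finset.mul_sum]
    congr 1
    exact Finset.sum_congr rfl fun j _ => by ring
  have hBinj : Function.Injective B.mulVec := by
    rw [← Matrix.coe_mulVecLin, ← LinearMap.ker_eq_bot, LinearMap.ker_eq_bot']
    intro x hx
    rw [Matrix.mulVecLin_apply] at hx
    have h1 : S x = (z * μ * l x) • w := by
      apply hinj
      rw [Matrix.mulVec_smul, hMw]
      funext i
      refine Fin.lastCases ?_ (fun i => ?_) i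
      · simp [hMl, hlast]
      · simp [hMc, hx, hcs]
    have h3 := congrFun h1 (Fin.last _)
    rw [hSl, Pi.smul_apply, smul_eq_mul] at h3
    have h4 : μ * (1 - z * y₀) * l x = 0 := by linear_combination h3
    have h5 : l x = 0 := by
      refine (mul_eq_zero.mp h4).resolve_left (mul_ne_zero hμ0 ?_)
      exact sub_ne_zero.mpr (Ne.symm hzy)
    funext i
    rw [← hSc x i, h1, h5]
    simp
  have hB : IsUnit B := Matrix.mulVec_injective_iff_isUnit.mp hBinj
  refine ⟨hB.unit, c, ?_⟩
  apply MvPolynomial.funext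
  intro x
  rw [eval_substMatrix_aux, IsUnit.unit_spec, smul_eval]
  have := hfun (S x)
  simp only [hMl, hMc, hSl, hSc] at this
  have e1 : (z * μ * l x) ^ d = c * (μ * l x) ^ d := by
    rw [mul_assoc, mul_pow, hz]
  rw [e1] at this
  linear_combination -this
end

section
/- Let k be an algebraically closed field of characteristic 0, let n ≥ 2 and d ≥ 2, and let F₁, F₂ ∈ k[x₀,…,x_{n+1}] be smooth homogeneous polynomials of degree d. If there exists a projective linear automorphism φ of ℙ^{n+2}(k) (i.e. the map of the projectivization of k^{n+3} induced by some element of GL_{n+3}(k)) mapping the projective zero locus of x_{n+2}^d − F₂ bijectively onto the projective zero locus of x_{n+2}^d − F₁, then there exists a projective linear automorphism ψ of ℙ^{n+1}(k) mapping the projective zero locus of F₂ bijectively onto the projective zero locus of F₁. -/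
open MvPolynomial

/-- The projective zero locus of `F` in `ℙ^{N-1}(k)`, the projectivization of `k^N`. -/
def projZeroLocus {k : Type*} [Field k] {N : ℕ} (F : MvPolynomial (Fin N) k) :
    Set (Projectivization k (Fin N → k)) :=
  {p | MvPolynomial.eval p.rep F = 0}

/-- The projective linear automorphism of `ℙ^{N-1}(k)` induced by `M ∈ GL_N(k)`. -/
noncomputable def projLinMap {k : Type*} [Field k] {N : ℕ} (M : GL (Fin N) k) :
    Projectivization k (Fin N → k) → Projectivization k (Fin N → k) :=
  Projectivization.map (M : Matrix (Fin N) (Fin N) k).mulVecLin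
    (by
      rw [Matrix.coe_mulVecLin]
      exact Matrix.mulVec_injective_iff_isUnit.2 M.isUnit)

namespace Polynomial

/-- Symmetric part of the commutation identity. -/
theorem ccd_comm_coeff {k : Type*} [Field k] [CharZero k] (d : ℕ) (hd : 2 ≤ d) (a b p q : k)
    (h : ∀ s t : k, (a + t) ^ d - a ^ d + ((b + t * p + s) ^ d - (b + t * p) ^ d) =
      (b + s) ^ d - b ^ d + ((a + s * q + t) ^ d - (a + s * q) ^ d)) :
    p * b ^ (d - 2) = q * a ^ (d - 2) := by
  obtain ⟨m, rfl⟩ : ∃ m, d = m + 2 := ⟨d - 2, by omega⟩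
  have hm1 : ((m : k) + 2) ≠ 0 := by exact_mod_cast (by omega : m + 2 ≠ 0)
  have hm2 : ((m : k) + 1) ≠ 0 := by exact_mod_cast (by omega : m + 1 ≠ 0)
  have h1 : ∀ t : k, (b + t * p) ^ (m + 1) =
      b ^ (m + 1) + q * ((a + t) ^ (m + 1) - a ^ (m + 1)) := by
    intro t
    have hp : (C ((a + t) ^ (m + 2) - a ^ (m + 2)) + ((C (b + t * p) + X) ^ (m + 2) - C ((b + t * p) ^ (m + 2))) : k[X]) =
        (C b + X) ^ (m + 2) - C (b ^ (m + 2)) + ((C (a + t) + X * C q) ^ (m + 2) - (C a + X * C q) ^ (m + 2)) := by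
      apply Polynomial.funext
      intro s
      have := h s t
      simp only [eval_add, eval_sub, eval_pow, eval_C, eval_X, eval_mul]
      linear_combination this
    have h2 := congrArg (fun f => eval 0 (derivative f)) hp
    simp [derivative_pow, derivative_mul] at h2
    have h3 : ((m : k) + 2) * (b + t * p) ^ (m + 1) =
      ((m : k) + 2) * (b ^ (m + 1) + q * ((a + t) ^ (m + 1) - a ^ (m + 1))) := by
      linear_combination h2
    exact mul_left_cancel₀ hm1 h3
  have hp : ((C b + X * C p) ^ (m + 1) : k[X]) =
      C (b ^ (m + 1)) + C q * ((C a + X) ^ (m + 1) - C (a ^ (m + 1))) := by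
    apply Polynomial.funext
    intro t
    have := h1 t
    simp only [eval_add, eval_sub, eval_pow, eval_C, eval_X, eval_mul]
    linear_combination this
  have h2 := congrArg (fun f => Polynomial.eval 0 (Polynomial.derivative f)) hp
  simp [Polynomial.derivative_pow, Polynomial.derivative_mul] at h2
  apply mul_left_cancel₀ hm2
  simp only [Nat.add_sub_cancel]
  linear_combination h2

theorem ccd_swap {k V : Type*} [Field k] [AddCommGroup V] [Module k V]
    (d : ℕ) (G : V → k) (w l : V →ₗ[k] k) (e v : V) (p : k)
    (hwe : w e = 1) (hlv : l v = 1) (hle : l e = p) (hwv : w v = p) (hp1 : p ≠ 1)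
    (hp : d = 2 ∨ p = 0)
    (hG1 : ∀ x (t : k), G (x + t • e) = G x + ((w x + t) ^ d - (w x) ^ d))
    (hG2 : ∀ x (t : k), G (x + t • v) = G x + ((l x + t) ^ d - (l x) ^ d)) :
    ∃ T : V →ₗ[k] V, Function.Injective T ∧ (∀ x, G (T x) = G x) ∧
      ∃ c : k, ∀ x, w (T x) = c * l x := by
  have hp2 : 1 - p ≠ 0 := sub_ne_zero.2 (Ne.symm hp1)
  let T : V →ₗ[k] V := LinearMap.id - ((1 - p)⁻¹ • (w - l)).smulRight (e - v)
  have hT : ∀ x, T x = x - ((1 - p)⁻¹ * (w x - l x)) • (e - v) := by intro x; simp [T]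
  have hw : ∀ x, w (T x) = l x := by
    intro x
    rw [hT]
    simp only [map_sub, map_smul, smul_eq_mul, hwe, hwv]
    field_simp
    ring
  have hl : ∀ x, l (T x) = w x := by
    intro x
    rw [hT]
    simp only [map_sub, map_smul, smul_eq_mul, hle, hlv]
    field_simp
    ring
  refine ⟨T, ?_, ?_, 1, fun x => by rw [hw, one_mul]⟩
  · have : ∀ x, T (T x) = x := by
      intro x
      rw [hT (T x), hw, hl, hT]
      module
    intro x y hxy
    rw [← this x, hxy, this]
  · intro x
    obtain ⟨s, hs⟩ : ∃ s, s = (1 - p)⁻¹ * (w x - l x) := ⟨_, rfl⟩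
    have hs' : s * (1 - p) = w x - l x := by rw [hs]; field_simp
    have e1 : T x = (x + (-s) • e) + s • v := by rw [hT, ← hs]; module
    rw [e1, hG2, hG1]
    simp only [map_add, map_smul, smul_eq_mul, hle]
    rcases hp with rfl | rfl
    · linear_combination (2 * s) * hs'
    · have : s = w x - l x := by simpa using hs'
      rw [this]
      ring

theorem ccd_core1 {k V : Type*} [Field k] [CharZero k] [AddCommGroup V] [Module k V]
    (d : ℕ) (hd : 2 ≤ d) (G : V → k) (w l : V →ₗ[k] k) (e v : V)
    (hwe : w e = 1) (hlv : l v = 1)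
    (hG1 : ∀ x (t : k), G (x + t • e) = G x + ((w x + t) ^ d - (w x) ^ d))
    (hG2 : ∀ x (t : k), G (x + t • v) = G x + ((l x + t) ^ d - (l x) ^ d)) :
    ∃ T : V →ₗ[k] V, Function.Injective T ∧ (∀ x, G (T x) = G x) ∧
      ∃ c : k, ∀ x, w (T x) = c * l x := by
  by_cases hdep : ∀ x, w (x - l x • v) = 0
  · refine ⟨LinearMap.id, Function.injective_id, fun x => rfl, w v, fun x => ?_⟩
    have := hdep x
    simp at this
    simp
    linear_combination this
  push Not at hdep
  obtain ⟨x₀, hx₀⟩ := hdep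
  obtain ⟨y, hy⟩ : ∃ y, y = (w (x₀ - l x₀ • v))⁻¹ • (x₀ - l x₀ • v) := ⟨_, rfl⟩
  have hwy : w y = 1 := by rw [hy, map_smul, smul_eq_mul, inv_mul_cancel₀ hx₀]
  have hly : l y = 0 := by rw [hy, map_smul]; simp [hlv]
  have key : ∀ a b : k, l e * b ^ (d - 2) = w v * a ^ (d - 2) := by
    intro a b
    apply ccd_comm_coeff d hd
    intro s t
    obtain ⟨x, hx⟩ : ∃ x, x = (a - b * w v) • y + b • v := ⟨_, rfl⟩
    have hwx : w x = a := by rw [hx]; simp [hwy]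
    have hlx : l x = b := by rw [hx]; simp [hly, hlv]
    have e1 : G (x + t • e + s • v) = G (x + s • v + t • e) := by congr 1; abel
    rw [hG2, hG1, hG1, hG2] at e1
    simp only [map_add, map_smul, smul_eq_mul, hwx, hlx] at e1
    linear_combination e1
  have hpq : l e = w v := by simpa using key 1 1
  have hp : d = 2 ∨ w v = 0 := by
    by_cases h2 : d = 2
    · exact Or.inl h2
    · right
      have := key 1 0
      rw [zero_pow (by omega)] at this
      simpa using this.symm
  by_cases hp1 : w v = 1
  · have hd2 : d = 2 := by
      rcases hp with h | h
      · exact h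
      · rw [h] at hp1; exact absurd hp1 zero_ne_one
    obtain ⟨T, h1, h2, c, h3⟩ := ccd_swap d G w (-l) e (-v) (-1) hwe (by simp [hlv])
      (by simp [hpq, hp1]) (by simp [hp1]) (by norm_num) (Or.inl hd2) hG1 (by
        intro x t
        have := hG2 x (-t)
        rw [show x + t • -v = x + (-t) • v by module, this, hd2]
        simp only [LinearMap.neg_apply]
        ring)
    refine ⟨T, h1, h2, -c, fun x => ?_⟩
    rw [h3]; simp
  · exact ccd_swap d G w l e v (w v) hwe hlv hpq rfl hp1 hp hG1 hG2

theorem ccd_core {k V : Type*} [Field k] [IsAlgClosed k] [CharZero k] [AddCommGroup V]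
    [Module k V]
    (d : ℕ) (hd : 2 ≤ d) (G : V → k) (w l : V →ₗ[k] k) (e v : V) (a : k) (ha : a ≠ 0)
    (hwe : w e = 1) (hlv : l v = 1)
    (hG1 : ∀ x (t : k), G (x + t • e) = G x + ((w x + t) ^ d - (w x) ^ d))
    (hG2 : ∀ x (t : k), G (x + t • v) = G x + a * ((l x + t) ^ d - (l x) ^ d)) :
    ∃ T : V →ₗ[k] V, Function.Injective T ∧ (∀ x, G (T x) = G x) ∧
      ∃ c : k, ∀ x, w (T x) = c * l x := by
  obtain ⟨b, hb⟩ := IsAlgClosed.exists_pow_nat_eq a (by omega : 0 < d)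
  have hb0 : b ≠ 0 := by
    rintro rfl
    rw [zero_pow (by omega)] at hb
    exact ha hb.symm
  obtain ⟨T, h1, h2, c, h3⟩ := ccd_core1 d hd G w (b • l) e (b⁻¹ • v) hwe
    (by simp [hlv, hb0]) hG1 (by
      intro x t
      rw [smul_smul, hG2, ← hb, mul_sub, ← mul_pow, ← mul_pow]
      simp only [LinearMap.smul_apply, smul_eq_mul]
      congr 3
      field_simp)
  refine ⟨T, h1, h2, c * b, fun x => ?_⟩
  rw [h3]; simp [mul_assoc]

theorem ccd_line {k : Type*} [Field k] {N d : ℕ} (F : MvPolynomial (Fin N) k)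
    (hF : F.IsHomogeneous d) (y z : Fin N → k) :
    ∃ p : k[X], p.natDegree ≤ d ∧ p.coeff d = MvPolynomial.eval z F ∧
      ∀ t, p.eval t = MvPolynomial.eval (y + t • z) F := by
  refine ⟨MvPolynomial.eval₂ C (fun i => C (z i) * X + C (y i)) F, ?_, ?_, ?_⟩
  · rw [MvPolynomial.eval₂_eq']
    apply natDegree_sum_le_of_forall_le
    intro m hm
    refine (natDegree_C_mul_le _ _).trans ?_
    refine (natDegree_prod_le _ _).trans ?_
    have := hF.coeff_eq_zero (d := m)
    have hdeg : m.degree = d := by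
      by_contra h
      exact (MvPolynomial.mem_support_iff.1 hm) (this h)
    rw [← hdeg, Finsupp.degree_eq_sum]
    apply Finset.sum_le_sum
    intro i _
    refine natDegree_pow_le.trans ?_
    have : (C (z i) * X + C (y i)).natDegree ≤ 1 := natDegree_linear_le
    nlinarith
  · rw [MvPolynomial.eval₂_eq', MvPolynomial.eval_eq', finsetSum_coeff]
    apply Finset.sum_congr rfl
    intro m hm
    have hdeg : m.degree = d := by
      by_contra h
      exact (MvPolynomial.mem_support_iff.1 hm) (hF.coeff_eq_zero h)
    rw [coeff_C_mul]
    congr 1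
    rw [← hdeg, Finsupp.degree_eq_sum]
    have : ∀ s : Finset (Fin N), (∏ i ∈ s, (C (z i) * X + C (y i)) ^ m i).natDegree ≤ ∑ i ∈ s, m i ∧ (∏ i ∈ s, (C (z i) * X + C (y i)) ^ m i).coeff (∑ i ∈ s, m i) = ∏ i ∈ s, z i ^ m i := by
      intro s
      induction s using Finset.induction_on with
      | empty => simp
      | insert i s hi ih =>
        have h1 : (C (z i) * X + C (y i)).natDegree ≤ 1 := natDegree_linear_le
        have h2 : ((C (z i) * X + C (y i)) ^ m i).natDegree ≤ m i :=
          natDegree_pow_le.trans (by nlinarith)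
        rw [Finset.prod_insert hi, Finset.sum_insert hi, Finset.prod_insert hi]
        refine ⟨natDegree_mul_le.trans (add_le_add h2 ih.1), ?_⟩
        rw [coeff_mul_add_eq_of_natDegree_le h2 ih.1, ih.2]
        congr 1
        have := coeff_pow_of_natDegree_le (m := m i) h1
        rw [mul_one] at this
        rw [this]; simp
    exact (this Finset.univ).2
  · intro t
    rw [MvPolynomial.eval₂_eq', MvPolynomial.eval_eq', eval_finsetSum]
    apply Finset.sum_congr rfl
    intro m hm
    simp only [eval_mul, eval_C, eval_prod, eval_pow, eval_add, eval_X, Pi.add_apply,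
      Pi.smul_apply, smul_eq_mul]
    congr 1
    apply Finset.prod_congr rfl
    intro i _
    ring

theorem ccd_eval_smul {k : Type*} [Field k] {N d : ℕ} (F : MvPolynomial (Fin N) k)
    (hF : F.IsHomogeneous d) (c : k) (x : Fin N → k) :
    MvPolynomial.eval (c • x) F = c ^ d * MvPolynomial.eval x F := by
  rw [MvPolynomial.eval_eq', MvPolynomial.eval_eq', Finset.mul_sum]
  apply Finset.sum_congr rfl
  intro m hm
  have hdeg : m.degree = d := by
    by_contra h
    exact (MvPolynomial.mem_support_iff.1 hm) (hF.coeff_eq_zero h)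
  simp only [Pi.smul_apply, smul_eq_mul, mul_pow]
  rw [Finset.prod_mul_distrib, Finset.prod_pow_eq_pow_sum, ← Finsupp.degree_eq_sum, hdeg]
  ring

theorem ccd_mem_locus {k : Type*} [Field k] {N d : ℕ} (F : MvPolynomial (Fin N) k)
    (hF : F.IsHomogeneous d) (v : Fin N → k) (hv : v ≠ 0) :
    Projectivization.mk k v hv ∈ projZeroLocus F ↔ MvPolynomial.eval v F = 0 := by
  obtain ⟨a, ha⟩ := Projectivization.exists_smul_eq_mk_rep k v hv
  change MvPolynomial.eval (Projectivization.mk k v hv).rep F = 0 ↔ _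
  rw [← ha, Units.smul_def, ccd_eval_smul F hF]
  simp

theorem ccd_bij_iff {k : Type*} [Field k] {N d : ℕ} (F₁ F₂ : MvPolynomial (Fin N) k)
    (hF₁ : F₁.IsHomogeneous d) (hF₂ : F₂.IsHomogeneous d) (M : GL (Fin N) k) :
    Set.BijOn (projLinMap M) (projZeroLocus F₂) (projZeroLocus F₁) ↔
      ∀ x : Fin N → k, x ≠ 0 → (MvPolynomial.eval x F₂ = 0 ↔
        MvPolynomial.eval ((M : Matrix (Fin N) (Fin N) k).mulVec x) F₁ = 0) := by
  have hinj : Function.Injective (M : Matrix (Fin N) (Fin N) k).mulVec :=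
    Matrix.mulVec_injective_iff_isUnit.2 M.isUnit
  have hne : ∀ x : Fin N → k, x ≠ 0 → (M : Matrix (Fin N) (Fin N) k).mulVec x ≠ 0 := by
    intro x hx h
    exact hx (hinj (by rw [h, Matrix.mulVec_zero]))
  have hmk : ∀ (x : Fin N → k) (hx : x ≠ 0), projLinMap M (Projectivization.mk k x hx) =
      Projectivization.mk k _ (hne x hx) := fun x hx => rfl
  have hPinj : Function.Injective (projLinMap M) := Projectivization.map_injective _ _
  constructor
  · intro h x hx
    rw [← ccd_mem_locus F₂ hF₂ x hx, ← ccd_mem_locus F₁ hF₁ _ (hne x hx), ← hmk x hx]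
    constructor
    · exact fun h' => h.mapsTo h'
    · intro h'
      obtain ⟨y, hy, hyx⟩ := h.surjOn h'
      rwa [← hPinj hyx]
  · intro h
    have h' : ∀ y, y ∈ projZeroLocus F₂ ↔ projLinMap M y ∈ projZeroLocus F₁ := by
      intro y
      induction y using Projectivization.ind with
      | h x hx => rw [hmk, ccd_mem_locus F₂ hF₂ x hx, ccd_mem_locus F₁ hF₁ _ (hne x hx), h x hx]
    refine ⟨fun y hy => (h' y).1 hy, hPinj.injOn, ?_⟩
    intro z hz
    obtain ⟨y, rfl⟩ : ∃ y, projLinMap M y = z := by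
      induction z using Projectivization.ind with
      | h x hx =>
        have hMM : (M : Matrix (Fin N) (Fin N) k).mulVec
            ((M⁻¹ : GL (Fin N) k).1.mulVec x) = x := by
          rw [Matrix.mulVec_mulVec, ← Units.val_mul, mul_inv_cancel]
          simp
        have hx' : (M⁻¹ : GL (Fin N) k).1.mulVec x ≠ 0 := by
          intro h0
          rw [h0, Matrix.mulVec_zero] at hMM
          exact hx hMM.symm
        refine ⟨Projectivization.mk k _ hx', ?_⟩
        rw [hmk]
        congr 1
    exact ⟨y, (h' y).2 hz, rfl⟩

/-- The cyclic cover polynomial. -/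
noncomputable abbrev ccdCover {k : Type*} [Field k] {m : ℕ} (d : ℕ)
    (F : MvPolynomial (Fin m) k) : MvPolynomial (Fin (m + 1)) k :=
  MvPolynomial.X (Fin.last m) ^ d - MvPolynomial.rename Fin.castSucc F

theorem ccd_cover_homog {k : Type*} [Field k] {m d : ℕ} (F : MvPolynomial (Fin m) k)
    (hF : F.IsHomogeneous d) : (ccdCover d F).IsHomogeneous d :=
  (MvPolynomial.isHomogeneous_X_pow _ _).sub hF.rename_isHomogeneous

theorem ccd_cover_eval {k : Type*} [Field k] {m d : ℕ} (F : MvPolynomial (Fin m) k)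
    (x : Fin (m + 1) → k) : MvPolynomial.eval x (ccdCover d F) =
      x (Fin.last m) ^ d - MvPolynomial.eval (fun i => x i.castSucc) F := by
  simp [ccdCover, MvPolynomial.eval_rename, Function.comp_def]

/-- The last basis vector. -/
abbrev ccdE (k : Type*) [Field k] (m : ℕ) : Fin (m + 1) → k := Pi.single (Fin.last m) 1

theorem ccd_cover_add {k : Type*} [Field k] {m d : ℕ} (F : MvPolynomial (Fin m) k)
    (x : Fin (m + 1) → k) (t : k) :
    MvPolynomial.eval (x + t • ccdE k m) (ccdCover d F) =
      MvPolynomial.eval x (ccdCover d F) +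
        ((x (Fin.last m) + t) ^ d - x (Fin.last m) ^ d) := by
  rw [ccd_cover_eval, ccd_cover_eval]
  have : (fun i : Fin m => (x + t • ccdE k m) i.castSucc) = fun i => x i.castSucc := by
    ext i
    simp [ccdE, Fin.castSucc_ne_last]
  rw [this]
  simp [ccdE]

theorem ccd_prop {k : Type*} [Field k] [IsAlgClosed k] [CharZero k] {m d : ℕ} (hd : 2 ≤ d)
    (F₂ : MvPolynomial (Fin m) k) (hF₂ : F₂.IsHomogeneous d)
    (G₁ : MvPolynomial (Fin (m + 1)) k) (hG₁ : G₁.IsHomogeneous d)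
    (L : (Fin (m + 1) → k) →ₗ[k] (Fin (m + 1) → k))
    (x₀ : Fin m → k) (hx₀ : MvPolynomial.eval x₀ F₂ ≠ 0)
    (h : ∀ x, MvPolynomial.eval x (ccdCover d F₂) = 0 → MvPolynomial.eval (L x) G₁ = 0)
    (x : Fin (m + 1) → k) :
    MvPolynomial.eval (L x) G₁ =
      MvPolynomial.eval (L (ccdE k m)) G₁ * MvPolynomial.eval x (ccdCover d F₂) := by
  classical
  have hd0 : d ≠ 0 := by omega
  have stepA : ∀ x : Fin (m + 1) → k, MvPolynomial.eval (fun i => x i.castSucc) F₂ ≠ 0 →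
      MvPolynomial.eval (L x) G₁ =
        MvPolynomial.eval (L (ccdE k m)) G₁ * MvPolynomial.eval x (ccdCover d F₂) := by
    intro x hx
    obtain ⟨a, ha⟩ : ∃ a, a = MvPolynomial.eval (fun i => x i.castSucc) F₂ := ⟨_, rfl⟩
    rw [← ha] at hx
    obtain ⟨c, hc⟩ : ∃ c, c = MvPolynomial.eval (L (ccdE k m)) G₁ := ⟨_, rfl⟩
    obtain ⟨y, hy⟩ : ∃ y, y = x + (-x (Fin.last m)) • ccdE k m := ⟨_, rfl⟩
    have hyG : ∀ t : k, MvPolynomial.eval (y + t • ccdE k m) (ccdCover d F₂) = t ^ d - a := by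
      intro t
      rw [hy, add_assoc, ← add_smul, ccd_cover_add, ccd_cover_eval, ← ha]
      ring
    obtain ⟨p, hp1, hp2, hp3⟩ := ccd_line G₁ hG₁ (L y) (L (ccdE k m))
    have hp3' : ∀ t, p.eval t = MvPolynomial.eval (L (y + t • ccdE k m)) G₁ := by
      intro t
      rw [hp3, map_add, map_smul]
    have hq : p - C c * (X ^ d - C a) = 0 := by
      have hsep : (X ^ d - C a).Separable :=
        separable_X_pow_sub_C a (by exact_mod_cast hd0) hx
      have hcard : (X ^ d - C a).roots.toFinset.card = d := by
        rw [Multiset.toFinset_card_of_nodup (nodup_roots hsep),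
          ← (IsAlgClosed.splits (X ^ d - C a)).natDegree_eq_card_roots, natDegree_X_pow_sub_C]
      apply eq_zero_of_degree_lt_of_eval_finset_eq_zero (X ^ d - C a).roots.toFinset
      · rw [hcard]
        rw [Polynomial.degree_lt_iff_coeff_zero]
        intro j hj
        rcases hj.eq_or_lt with rfl | hj
        · simp [hp2, hc, coeff_C, hd0]
        · rw [coeff_sub, coeff_eq_zero_of_natDegree_lt (lt_of_le_of_lt hp1 hj), coeff_C_mul,
            coeff_eq_zero_of_natDegree_lt (by rwa [natDegree_X_pow_sub_C])]
          simp
      · intro t ht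
        rw [Multiset.mem_toFinset] at ht
        have ht' : t ^ d - a = 0 := by simpa using (isRoot_of_mem_roots ht).eq_zero
        have h0 := h (y + t • ccdE k m) (by rw [hyG, ht'])
        rw [eval_sub, hp3', h0]
        simp [ht']
    have h1 := congrArg (eval (x (Fin.last m))) hq
    simp only [eval_sub, eval_mul, eval_C, eval_pow, eval_X, eval_zero, hp3', ← hyG] at h1
    have h2 : y + x (Fin.last m) • ccdE k m = x := by rw [hy]; module
    rw [h2] at h1
    rw [← hc]
    linear_combination h1
  obtain ⟨z, hz⟩ : ∃ z : Fin (m + 1) → k, z = Fin.snoc x₀ 0 := ⟨_, rfl⟩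
  have hz' : (fun i : Fin m => z i.castSucc) = x₀ := by ext i; simp [hz]
  obtain ⟨p, hp1, hp2, hp3⟩ := ccd_line G₁ hG₁ (L x) (L z)
  obtain ⟨q, hq1, hq2, hq3⟩ := ccd_line (ccdCover d F₂) (ccd_cover_homog F₂ hF₂) x z
  obtain ⟨f, hf1, hf2, hf3⟩ := ccd_line F₂ hF₂ (fun i => x i.castSucc) x₀
  have hf0 : f ≠ 0 := by
    rintro rfl
    exact hx₀ (by rw [← hf2]; simp)
  have hprod : f * (p - C (MvPolynomial.eval (L (ccdE k m)) G₁) * q) = 0 := by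
    apply Polynomial.funext
    intro t
    simp only [eval_mul, eval_sub, eval_C, eval_zero, hp3, hq3]
    by_cases hft : f.eval t = 0
    · rw [hft, zero_mul]
    · have : MvPolynomial.eval (fun i => (x + t • z) i.castSucc) F₂ ≠ 0 := by
        rw [hf3] at hft
        have e1 : (fun i : Fin m => (x + t • z) i.castSucc) =
            (fun i => x i.castSucc) + t • x₀ := by
          ext i
          simp [← hz']
        rwa [e1]
      have := stepA _ this
      rw [map_add, map_smul] at this
      rw [this, sub_self, mul_zero]
  have h1 := congrArg (eval 0) ((mul_eq_zero.1 hprod).resolve_left hf0)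
  simp only [eval_mul, eval_sub, eval_C, eval_zero, hp3, hq3, zero_smul, add_zero] at h1
  exact sub_eq_zero.1 h1

end Polynomial

/-- If a projective linear automorphism of `ℙ^{n+2}(k)` maps the projective zero locus of
`x_{n+2}^d − F₂` bijectively onto that of `x_{n+2}^d − F₁`, then some projective linear
automorphism of `ℙ^{n+1}(k)` maps the projective zero locus of `F₂` bijectively onto
that of `F₁`. -/
theorem cyclic_cover_determines_hypersurface_proj
    {k : Type*} [Field k] [IsAlgClosed k] [CharZero k]
    (n d : ℕ) (hn : 2 ≤ n) (hd : 2 ≤ d)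
    (F₁ F₂ : MvPolynomial (Fin (n + 2)) k)
    (hF₁ : F₁.IsHomogeneous d) (hF₂ : F₂.IsHomogeneous d)
    (hs₁ : SmoothPoly F₁) (hs₂ : SmoothPoly F₂)
    (H : ∃ M : GL (Fin (n + 3)) k,
      Set.BijOn (projLinMap M)
        (projZeroLocus (MvPolynomial.X (Fin.last (n + 2)) ^ d -
          MvPolynomial.rename Fin.castSucc F₂))
        (projZeroLocus (MvPolynomial.X (Fin.last (n + 2)) ^ d -
          MvPolynomial.rename Fin.castSucc F₁))) :
    ∃ M' : GL (Fin (n + 2)) k,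
      Set.BijOn (projLinMap M') (projZeroLocus F₂) (projZeroLocus F₁) := by
  obtain ⟨M, hM⟩ := H
  have hd0 : d ≠ 0 := by omega
  have hG₁ := Polynomial.ccd_cover_homog F₁ hF₁
  have hG₂ := Polynomial.ccd_cover_homog F₂ hF₂
  have hM := (Polynomial.ccd_bij_iff (Polynomial.ccdCover d F₁) (Polynomial.ccdCover d F₂) hG₁ hG₂ M).1 hM
  obtain ⟨x₀, hx₀⟩ : ∃ x₀, MvPolynomial.eval x₀ F₂ ≠ 0 := by
    by_contra! h
    have h0 : F₂ = 0 := MvPolynomial.funext (by simpa using h)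
    have := hs₂ (fun _ => 1) (by simp [h0])
    exact one_ne_zero (congrFun this 0)
  let L : (Fin (n + 3) → k) →ₗ[k] (Fin (n + 3) → k) :=
    (M : Matrix (Fin (n + 3)) (Fin (n + 3)) k).mulVecLin
  let L' : (Fin (n + 3) → k) →ₗ[k] (Fin (n + 3) → k) :=
    ((M⁻¹ : GL (Fin (n + 3)) k) : Matrix (Fin (n + 3)) (Fin (n + 3)) k).mulVecLin
  have hLL' : ∀ x, L (L' x) = x := by
    intro x
    simp only [L, L', Matrix.mulVecLin_apply]
    rw [Matrix.mulVec_mulVec, ← Units.val_mul, mul_inv_cancel]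
    simp
  have hL'L : ∀ x, L' (L x) = x := by
    intro x
    simp only [L, L', Matrix.mulVecLin_apply]
    rw [Matrix.mulVec_mulVec, ← Units.val_mul, inv_mul_cancel]
    simp
  have hML : ∀ x, x ≠ 0 → (MvPolynomial.eval x (Polynomial.ccdCover d F₂) = 0 ↔
      MvPolynomial.eval (L x) (Polynomial.ccdCover d F₁) = 0) := hM
  obtain ⟨c, hc⟩ : ∃ c, c = MvPolynomial.eval (L (Polynomial.ccdE k (n + 2))) (Polynomial.ccdCover d F₁) := ⟨_, rfl⟩
  have hprop : ∀ x, MvPolynomial.eval (L x) (Polynomial.ccdCover d F₁) =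
      c * MvPolynomial.eval x (Polynomial.ccdCover d F₂) := by
    intro x
    rw [hc]
    refine Polynomial.ccd_prop hd F₂ hF₂ _ hG₁ L x₀ hx₀ ?_ x
    intro x hx
    by_cases hx0 : x = 0
    · have := Polynomial.ccd_eval_smul _ hG₁ 0 0
      rw [hx0, map_zero]
      simpa [zero_pow hd0] using this
    · exact (hML x hx0).1 hx
  have hc0 : c ≠ 0 := by
    intro h0
    rw [hc] at h0
    have hne : Polynomial.ccdE k (n + 2) ≠ 0 := by simp [Polynomial.ccdE]
    have h1 := (hML _ hne).2 h0
    have h2 := Polynomial.ccd_cover_add (d := d) F₂ 0 1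
    rw [zero_add, one_smul, h1] at h2
    have h3 := Polynomial.ccd_eval_smul _ hG₂ 0 0
    rw [zero_smul, zero_pow hd0, zero_mul] at h3
    rw [h3] at h2
    simp [zero_pow hd0] at h2
  obtain ⟨T, hTinj, hTG, b, hTb⟩ := Polynomial.ccd_core d hd
    (fun x => MvPolynomial.eval x (Polynomial.ccdCover d F₁))
    (LinearMap.proj (Fin.last (n + 2))) (LinearMap.proj (Fin.last (n + 2)) ∘ₗ L')
    (Polynomial.ccdE k (n + 2)) (L (Polynomial.ccdE k (n + 2))) c hc0 (by simp [Polynomial.ccdE])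
    (by simp [hL'L]) (fun x t => Polynomial.ccd_cover_add F₁ x t) (by
      intro x t
      have e1 : x + t • L (Polynomial.ccdE k (n + 2)) = L (L' x + t • Polynomial.ccdE k (n + 2)) := by
        rw [map_add, map_smul, hLL']
      have e2 := hprop (L' x)
      rw [hLL'] at e2
      simp only [e1]
      rw [hprop, Polynomial.ccd_cover_add, e2]
      simp only [LinearMap.comp_apply, LinearMap.proj_apply]
      ring)
  -- restriction to the hyperplane
  let ι : (Fin (n + 2) → k) →ₗ[k] (Fin (n + 3) → k) :=
    { toFun := fun x => Fin.snoc (α := fun _ => k) x 0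
      map_add' := by
        intro x y
        ext i
        refine Fin.lastCases ?_ (fun j => ?_) i <;> simp
      map_smul' := by
        intro r x
        ext i
        refine Fin.lastCases ?_ (fun j => ?_) i <;> simp }
  have hιl : ∀ x, ι x (Fin.last (n + 2)) = 0 := by intro x; simp [ι]
  have hιc : ∀ x (i : Fin (n + 2)), ι x i.castSucc = x i := by intro x i; simp [ι]
  let R : (Fin (n + 2) → k) →ₗ[k] (Fin (n + 2) → k) :=
    LinearMap.funLeft k k Fin.castSucc ∘ₗ T ∘ₗ L ∘ₗ ι
  have hlast : ∀ x, T (L (ι x)) (Fin.last (n + 2)) = 0 := by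
    intro x
    have := hTb (L (ι x))
    simp only [LinearMap.comp_apply, LinearMap.proj_apply, hL'L, hιl, mul_zero] at this
    exact this
  have hRval : ∀ x i, R x i = T (L (ι x)) (Fin.castSucc i) := fun x i => rfl
  have hRF : ∀ x, MvPolynomial.eval (R x) F₁ = c * MvPolynomial.eval x F₂ := by
    intro x
    have h1 := hTG (L (ι x))
    rw [hprop, Polynomial.ccd_cover_eval, Polynomial.ccd_cover_eval, hlast, hιl, zero_pow hd0] at h1
    simp only [hιc] at h1
    have h2 : (fun i : Fin (n + 2) => T (L (ι x)) i.castSucc) = R x := rfl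
    rw [h2] at h1
    linear_combination -h1
  have hRinj : Function.Injective R := by
    rw [injective_iff_map_eq_zero]
    intro x hx
    have h1 : T (L (ι x)) = 0 := by
      ext i
      refine Fin.lastCases (hlast x) (fun j => ?_) i
      rw [← hRval, hx]; rfl
    have h2 : L (ι x) = 0 := hTinj (by rw [h1, map_zero])
    have h3 : ι x = 0 := by rw [← hL'L (ι x), h2, map_zero]
    ext i
    rw [← hιc x i, h3]; rfl
  have hunit : IsUnit (LinearMap.toMatrix' R) := by
    rw [← Matrix.mulVec_injective_iff_isUnit]
    intro x y hxy
    apply hRinj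
    simpa [LinearMap.toMatrix'_mulVec] using hxy
  refine ⟨hunit.unit, (Polynomial.ccd_bij_iff F₁ F₂ hF₁ hF₂ _).2 ?_⟩
  intro x hx
  rw [IsUnit.unit_spec, LinearMap.toMatrix'_mulVec, hRF]
  simp [hc0]
end

section
/- Let k be an algebraically closed field of characteristic 0, let n ≥ 2 and d ≥ 2. Consider the action of GL_{N+1}(k) × kˣ on homogeneous polynomials of degree d in k[x₀,…,x_N] given by (g, c)·F = c·(F ∘ g). Then the map sending a smooth homogeneous polynomial F of degree d in the n+2 variables x₀,…,x_{n+1} to the smooth homogeneous polynomial x_{n+2}^d − F in the n+3 variables x₀,…,x_{n+2} descends to a well-defined and injective map from the set of orbits of smooth degree-d forms in k[x₀,…,x_{n+1}] under GL_{n+2}(k) × kˣ to the set of orbits of smooth degree-d forms in k[x₀,…,x_{n+2}] under GL_{n+3}(k) × kˣ. -/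
open MvPolynomial

/-- The smooth degree-`d` forms in `N` variables. -/
def SmoothForm (k : Type*) [CommRing k] (N d : ℕ) : Type _ :=
  {F : MvPolynomial (Fin N) k // F.IsHomogeneous d ∧ SmoothPoly F}

/-- The orbit relation on smooth degree-`d` forms induced by the `GL_N(k) × kˣ` action. -/
def orbitRel (k : Type*) [CommRing k] (N d : ℕ) :
    SmoothForm k N d → SmoothForm k N d → Prop :=
  fun F G => ProjectivelyEquivalent F.1 G.1

/-- The cyclic cover equation `x_{N+1}^d − F` of a form `F` in `x₀, …, x_N`. -/
noncomputable def cyclicCover {k : Type*} [CommRing k] {N : ℕ} (d : ℕ)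
    (F : MvPolynomial (Fin (N + 1)) k) : MvPolynomial (Fin (N + 2)) k :=
  MvPolynomial.X (Fin.last (N + 1)) ^ d - MvPolynomial.rename Fin.castSucc F

lemma eval_substMatrix {k : Type*} [CommRing k] {N : ℕ}
    (g : Matrix (Fin N) (Fin N) k) (F : MvPolynomial (Fin N) k) (x : Fin N → k) :
    eval x (substMatrix g F) = eval (g.mulVec x) F := by
  unfold substMatrix
  induction F using MvPolynomial.induction_on with
  | C a => simp
  | add p q hp hq => simp only [map_add, hp, hq]
  | mul_X p i hp =>
    rw [map_mul, map_mul, map_mul, hp, aeval_X, eval_X]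
    simp [Matrix.mulVec, dotProduct]

lemma projEquiv_iff {k : Type*} [Field k] [CharZero k] {N : ℕ}
    (F F' : MvPolynomial (Fin N) k) :
    ProjectivelyEquivalent F F' ↔
      ∃ φ : (Fin N → k) ≃ₗ[k] (Fin N → k), ∃ c : k, c ≠ 0 ∧
        ∀ x, eval (φ x) F = c * eval x F' := by
  constructor
  · rintro ⟨g, c, h⟩
    refine ⟨Matrix.toLin'OfInv (M' := (g : Matrix (Fin N) (Fin N) k))
      (M := ((g⁻¹ : GL (Fin N) k) : Matrix (Fin N) (Fin N) k)) ?_ ?_, c, c.ne_zero, ?_⟩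
    · rw [← Units.val_mul]; simp
    · rw [← Units.val_mul]; simp
    · intro x
      have := congrArg (eval x) h
      rw [eval_substMatrix, smul_eval] at this
      simpa [Matrix.toLin'OfInv] using this
  · rintro ⟨φ, c, hc, h⟩
    refine ⟨⟨LinearMap.toMatrix' φ.toLinearMap, LinearMap.toMatrix' φ.symm.toLinearMap, ?_, ?_⟩,
      Units.mk0 c hc, ?_⟩
    · rw [← LinearMap.toMatrix'_comp]; simp
    · rw [← LinearMap.toMatrix'_comp]; simp
    · apply MvPolynomial.funext
      intro x
      rw [eval_substMatrix, smul_eval]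
      simpa [LinearMap.toMatrix'_mulVec] using h x

lemma orbitRel_equivalence (k : Type*) [Field k] [CharZero k] (N d : ℕ) :
    Equivalence (orbitRel k N d) := by
  refine ⟨?_, ?_, ?_⟩
  · intro F
    exact (projEquiv_iff _ _).2 ⟨LinearEquiv.refl _ _, 1, one_ne_zero, by simp⟩
  · intro F G h
    obtain ⟨φ, c, hc, h⟩ := (projEquiv_iff _ _).1 h
    refine (projEquiv_iff _ _).2 ⟨φ.symm, c⁻¹, inv_ne_zero hc, fun x => ?_⟩
    have := h (φ.symm x)
    rw [φ.apply_symm_apply] at this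
    rw [this]; field_simp
  · intro F G K h1 h2
    obtain ⟨φ, c, hc, h1⟩ := (projEquiv_iff _ _).1 h1
    obtain ⟨ψ, e, he, h2⟩ := (projEquiv_iff _ _).1 h2
    refine (projEquiv_iff _ _).2 ⟨ψ.trans φ, c * e, mul_ne_zero hc he, fun x => ?_⟩
    rw [LinearEquiv.trans_apply, h1, h2, mul_assoc]

lemma eval_cyclicCover {k : Type*} [CommRing k] {N : ℕ} (d : ℕ)
    (F : MvPolynomial (Fin (N + 1)) k) (z : Fin (N + 2) → k) :
    eval z (cyclicCover d F) = z (Fin.last _) ^ d - eval (fun i => z (Fin.castSucc i)) F := by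
  simp [cyclicCover, eval_rename, Function.comp_def]

lemma cyclicCover_homog {k : Type*} [CommRing k] {N : ℕ} (d : ℕ)
    (F : MvPolynomial (Fin (N + 1)) k) (h : F.IsHomogeneous d) :
    (cyclicCover d F).IsHomogeneous d :=
  (isHomogeneous_X_pow _ _).sub h.rename_isHomogeneous

lemma cyclicCover_smooth {k : Type*} [Field k] [CharZero k] {N : ℕ} (d : ℕ) (hd : 2 ≤ d)
    (F : MvPolynomial (Fin (N + 1)) k) (h : SmoothPoly F) :
    SmoothPoly (cyclicCover d F) := by
  intro z hz
  have h0 : (fun i => z (Fin.castSucc i)) = 0 := by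
    apply h
    intro i
    have := hz (Fin.castSucc i)
    rw [cyclicCover, map_sub, pderiv_rename (Fin.castSucc_injective _), pderiv_pow,
      pderiv_X_of_ne (Fin.castSucc_lt_last i).ne'] at this
    simpa [eval_rename, Function.comp_def] using this
  have h1 : z (Fin.last _) = 0 := by
    have := hz (Fin.last _)
    have hv : pderiv (Fin.last (N + 1)) (rename Fin.castSucc F) = 0 := by
      apply pderiv_eq_zero_of_notMem_vars
      intro hm
      have := vars_rename Fin.castSucc F hm
      simp only [Finset.mem_image] at this
      obtain ⟨i, _, hi⟩ := this
      exact (Fin.castSucc_lt_last i).ne hi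
    rw [cyclicCover, map_sub, hv, pderiv_pow, pderiv_X_self] at this
    have hd0 : d ≠ 0 := by omega
    simp [hd0] at this
    exact this.1
  ext i
  refine Fin.lastCases h1 (fun j => ?_) i
  exact congrFun h0 j

/-- First-order coefficient extraction. -/
lemma deriv_extract {k : Type*} [Field k] [CharZero k] (d : ℕ) (A B C D α β γ δ r q : k)
    (h : ∀ s : k, (A + s * α) ^ d - (B + s * β) ^ d - r =
      (C + s * γ) ^ d - (D + s * δ) ^ d - q) :
    (d : k) * (A ^ (d - 1) * α - B ^ (d - 1) * β) =
      d * (C ^ (d - 1) * γ - D ^ (d - 1) * δ) := by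
  have hp : ((Polynomial.C A + Polynomial.X * Polynomial.C α) ^ d
      - (Polynomial.C B + Polynomial.X * Polynomial.C β) ^ d - Polynomial.C r : Polynomial k) =
      (Polynomial.C C + Polynomial.X * Polynomial.C γ) ^ d
      - (Polynomial.C D + Polynomial.X * Polynomial.C δ) ^ d - Polynomial.C q := by
    apply Polynomial.funext
    intro s
    have := h s
    simp only [Polynomial.eval_sub, Polynomial.eval_pow, Polynomial.eval_add,
      Polynomial.eval_mul, Polynomial.eval_C, Polynomial.eval_X]
    exact this
  have := congrArg (fun p => Polynomial.eval 0 (Polynomial.derivative p)) hp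
  simp [Polynomial.derivative_pow] at this
  linear_combination this

lemma mixed_coeff {k : Type*} [Field k] [CharZero k] (d : ℕ) (hd : 2 ≤ d) (y m a α : k)
    (h : ∀ s t : k, (y + s + t * a) ^ d - (y + s) ^ d - (y + t * a) ^ d + y ^ d =
      (m + s * α + t) ^ d - (m + s * α) ^ d - (m + t) ^ d + m ^ d) :
    a * y ^ (d - 2) = α * m ^ (d - 2) := by
  have h1 : ∀ t : k, (d : k) * ((y + t * a) ^ (d - 1) * 1 - y ^ (d - 1) * 1) =
      d * ((m + t) ^ (d - 1) * α - m ^ (d - 1) * α) := by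
    intro t
    apply deriv_extract d _ _ _ _ _ _ _ _ ((y + t * a) ^ d - y ^ d) ((m + t) ^ d - m ^ d)
    intro s
    have := h s t
    rw [show y + t * a + s * 1 = y + s + t * a by ring, show y + s * 1 = y + s by ring,
      show m + t + s * α = m + s * α + t by ring]
    linear_combination this
  have hd0 : (d : k) ≠ 0 := by exact_mod_cast (by omega : d ≠ 0)
  have hd1 : ((d - 1 : ℕ) : k) ≠ 0 := by exact_mod_cast (by omega : d - 1 ≠ 0)
  have hp : ((Polynomial.C y + Polynomial.X * Polynomial.C a) ^ (d - 1)
      - Polynomial.C (y ^ (d - 1)) : Polynomial k) =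
      ((Polynomial.C m + Polynomial.X) ^ (d - 1) - Polynomial.C (m ^ (d - 1)))
        * Polynomial.C α := by
    apply Polynomial.funext
    intro t
    have := mul_left_cancel₀ hd0 (h1 t)
    simp only [Polynomial.eval_sub, Polynomial.eval_pow, Polynomial.eval_add, Polynomial.eval_mul,
      Polynomial.eval_C, Polynomial.eval_X]
    linear_combination this
  have := congrArg (fun p => Polynomial.eval 0 (Polynomial.derivative p)) hp
  simp only [Polynomial.derivative_sub, Polynomial.derivative_pow, Polynomial.derivative_add,
    Polynomial.derivative_mul, Polynomial.derivative_C, Polynomial.derivative_X,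
    Polynomial.eval_sub, Polynomial.eval_pow, Polynomial.eval_add, Polynomial.eval_mul,
      Polynomial.eval_C, Polynomial.eval_X, Polynomial.eval_zero, Polynomial.eval_one] at this
  rw [show d - 1 - 1 = d - 2 by omega] at this
  apply mul_left_cancel₀ hd1
  simp at this
  linear_combination this

/-- The key geometric lemma, normalised version. -/
lemma swap_lemma {k V : Type*} [Field k] [CharZero k] [AddCommGroup V] [Module k V]
    (d : ℕ) (hd : 2 ≤ d) (H : V → k) (l m : V →ₗ[k] k) (v w : V) (hv : l v = 1) (hw : m w = 1)
    (hlv : ∀ z s, H (z + s • v) = H z + (l z + s) ^ d - l z ^ d)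
    (hmw : ∀ z s, H (z + s • w) = H z + (m z + s) ^ d - m z ^ d)
    (hb : d = 2 → m v ≠ 1) :
    ∃ σ : V ≃ₗ[k] V, ∀ z, m z = 0 → l (σ z) = 0 ∧ H (σ z) = H z := by
  have key : ∀ z, l w * l z ^ (d - 2) = m v * m z ^ (d - 2) := by
    intro z
    apply mixed_coeff d hd
    intro s t
    have e : z + s • v + t • w = z + t • w + s • v := by abel
    have h1 := hmw (z + s • v) t
    have h2 := hlv (z + t • w) s
    rw [e, h2, hlv, hmw] at h1
    simp only [map_add, map_smul, smul_eq_mul, hv, hw] at h1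
    rw [show l z + t * l w + s = l z + s + t * l w by ring] at h1
    linear_combination h1
  have kv := key v
  have kw := key w
  rw [hv, one_pow, mul_one] at kv
  rw [hw, one_pow, mul_one] at kw
  -- the reflection
  have refl_case : l w = m v → m v ≠ 1 → (d = 2 ∨ m v = 0) →
      ∃ σ : V ≃ₗ[k] V, ∀ z, m z = 0 → l (σ z) = 0 ∧ H (σ z) = H z := by
    intro hab hb1 hcase
    have hb2 : 1 - m v ≠ 0 := fun h => hb1 (by linear_combination -h)
    let f : V →ₗ[k] k := (1 - m v)⁻¹ • (l - m)
    have hf : f (v - w) = 2 := by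
      simp only [f, LinearMap.smul_apply, LinearMap.sub_apply, map_sub, hv, hw, hab, smul_eq_mul]
      field_simp
      ring
    refine ⟨Module.reflection hf, fun z hz => ?_⟩
    have hfz : f z = (1 - m v)⁻¹ * l z := by simp [f, hz]
    have hr : Module.reflection hf z = z + (f z) • w + (- f z) • v := by
      rw [Module.reflection_apply]
      simp only [smul_sub, neg_smul]
      abel
    have hs : f z * (1 - m v) = l z := by rw [hfz]; field_simp
    rw [hr]
    constructor
    · simp only [map_add, map_smul, smul_eq_mul, hv, hab]
      linear_combination -hs
    · rw [hlv, hmw]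
      simp only [map_add, map_smul, smul_eq_mul, hab, hz]
      rcases hcase with rfl | h0
      · linear_combination (2 * f z) * hs
      · rw [h0] at hs ⊢
        have : l z = f z := by linear_combination -hs
        have hd0 : d ≠ 0 := by omega
        rw [this]
        simp [hd0]
  by_cases h2 : d = 2
  · subst h2
    exact refl_case (by simpa using kv) (hb rfl) (Or.inl rfl)
  · by_cases ha : l w = 0
    · have hmv : m v = 0 := by
        rw [← kw, ha]; simp
      exact refl_case (by rw [ha, hmv]) (by rw [hmv]; exact zero_ne_one) (Or.inr hmv)
    · refine ⟨LinearEquiv.refl _ _, fun z hz => ⟨?_, rfl⟩⟩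
      have := key z
      have h3 : d - 2 ≠ 0 := by omega
      rw [hz, zero_pow h3, mul_zero] at this
      rcases mul_eq_zero.1 this with h | h
      · exact absurd h ha
      · exact pow_eq_zero_iff h3 |>.1 h

lemma swap_lemma_scaled {k V : Type*} [Field k] [IsAlgClosed k] [CharZero k]
    [AddCommGroup V] [Module k V]
    (d : ℕ) (hd : 2 ≤ d) (H : V → k) (l m : V →ₗ[k] k) (v w : V) (hv : l v = 1) (hw : m w = 1)
    (c : k) (hc : c ≠ 0)
    (hlv : ∀ z s, H (z + s • v) = H z + (l z + s) ^ d - l z ^ d)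
    (hmw : ∀ z s, H (z + s • w) = H z + c * ((m z + s) ^ d - m z ^ d)) :
    ∃ σ : V ≃ₗ[k] V, ∀ z, m z = 0 → l (σ z) = 0 ∧ H (σ z) = H z := by
  obtain ⟨e, he, hb⟩ : ∃ e : k, e ^ d = c ∧ (d = 2 → e * m v ≠ 1) := by
    obtain ⟨e, he⟩ := IsAlgClosed.exists_pow_nat_eq c (by omega : 0 < d)
    by_cases h : d = 2 ∧ e * m v = 1
    · obtain ⟨rfl, h⟩ := h
      refine ⟨-e, by rw [← he]; ring, fun _ h' => ?_⟩
      have : (2 : k) = 0 := by linear_combination -h - h'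
      exact two_ne_zero this
    · exact ⟨e, he, fun h2 h3 => h ⟨h2, h3⟩⟩
  have he0 : e ≠ 0 := by
    rintro rfl
    rw [zero_pow (by omega)] at he
    exact hc he.symm
  obtain ⟨σ, hσ⟩ := swap_lemma d hd H l (e • m) v (e⁻¹ • w) hv (by simp [hw, he0]) hlv
    (by
      intro z s
      rw [smul_smul, hmw, ← he]
      simp only [LinearMap.smul_apply, smul_eq_mul]
      rw [mul_sub, ← mul_pow, ← mul_pow, mul_add, show e * (s * e⁻¹) = s by field_simp]
      ring) (by simpa using hb)
  exact ⟨σ, fun z hz => hσ z (by simp [hz])⟩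

lemma cyclicCover_wd {k : Type*} [Field k] [IsAlgClosed k] [CharZero k] {N : ℕ} (d : ℕ)
    (hd : 2 ≤ d) (F F' : MvPolynomial (Fin (N + 1)) k) (h : ProjectivelyEquivalent F F') :
    ProjectivelyEquivalent (cyclicCover d F) (cyclicCover d F') := by
  obtain ⟨φ, c, hc, h⟩ := (projEquiv_iff _ _).1 h
  obtain ⟨e, he⟩ := IsAlgClosed.exists_pow_nat_eq c (by omega : 0 < d)
  have he0 : e ≠ 0 := by
    rintro rfl
    rw [zero_pow (by omega)] at he
    exact hc he.symm
  let ψ : (Fin (N + 2) → k) →ₗ[k] (Fin (N + 2) → k) :=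
    { toFun := fun z => Fin.snoc (α := fun _ => k) (φ (fun i => z (Fin.castSucc i)))
        (e * z (Fin.last _))
      map_add' := by
        intro x y
        ext i
        refine Fin.lastCases ?_ (fun j => ?_) i
        · simp [mul_add]
        · have : (fun i => (x + y) (Fin.castSucc i)) = (fun i : Fin (N + 1) => x (Fin.castSucc i)) +
            (fun i => y (Fin.castSucc i)) := rfl
          rw [this, map_add]
          simp
      map_smul' := by
        intro r x
        ext i
        refine Fin.lastCases ?_ (fun j => ?_) i
        · simp; ring
        · have : (fun i => (r • x) (Fin.castSucc i)) =
            r • (fun i : Fin (N + 1) => x (Fin.castSucc i)) := rfl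
          rw [this, map_smul]
          simp }
  have hψ : ∀ z, ψ z = Fin.snoc (α := fun _ => k) (φ (fun i => z (Fin.castSucc i)))
        (e * z (Fin.last _)) := fun _ => rfl
  have hinj : Function.Injective ψ := by
    rw [injective_iff_map_eq_zero]
    intro z hz
    rw [hψ] at hz
    have h1 : φ (fun i => z (Fin.castSucc i)) = 0 := by
      ext i
      have := congrFun hz (Fin.castSucc i)
      simpa using this
    have h2 := congrFun hz (Fin.last _)
    simp [he0] at h2
    rw [LinearEquiv.map_eq_zero_iff] at h1
    ext i
    refine Fin.lastCases h2 (fun j => ?_) i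
    exact congrFun h1 j
  refine (projEquiv_iff _ _).2 ⟨LinearEquiv.ofInjectiveEndo ψ hinj, c, hc, fun z => ?_⟩
  rw [LinearEquiv.coe_ofInjectiveEndo, hψ, eval_cyclicCover, eval_cyclicCover]
  simp only [Fin.snoc_last, Fin.snoc_castSucc]
  rw [h, mul_pow, he]
  ring

lemma cyclicCover_inj {k : Type*} [Field k] [IsAlgClosed k] [CharZero k] {N : ℕ} (d : ℕ)
    (hd : 2 ≤ d) (F F' : MvPolynomial (Fin (N + 1)) k)
    (h : ProjectivelyEquivalent (cyclicCover d F) (cyclicCover d F')) :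
    ProjectivelyEquivalent F F' := by
  obtain ⟨φ, c, hc, h⟩ := (projEquiv_iff _ _).1 h
  have hd0 : d ≠ 0 := by omega
  let l : (Fin (N + 2) → k) →ₗ[k] k := LinearMap.proj (Fin.last _)
  have hl : ∀ z, l z = z (Fin.last _) := fun _ => rfl
  let v : Fin (N + 2) → k := Pi.single (Fin.last _) 1
  have hv : l v = 1 := by simp [hl, v]
  have hlv : ∀ (G : MvPolynomial (Fin (N + 1)) k) (z : Fin (N + 2) → k) (s : k),
      eval (z + s • v) (cyclicCover d G) =
        eval z (cyclicCover d G) + (l z + s) ^ d - l z ^ d := by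
    intro G z s
    rw [eval_cyclicCover, eval_cyclicCover]
    have : (fun i => (z + s • v) (Fin.castSucc i)) =
        fun i : Fin (N + 1) => z (Fin.castSucc i) := by
      funext i
      simp [v, (Fin.castSucc_lt_last i).ne]
    rw [this, hl]
    simp [v]
    ring
  obtain ⟨σ, hσ⟩ := swap_lemma_scaled d hd (fun z => eval z (cyclicCover d F)) l
    (l ∘ₗ φ.symm.toLinearMap) v (φ v) hv (by simp [hv]) c hc (hlv F) (by
      intro z s
      have e1 : z + s • φ v = φ (φ.symm z + s • v) := by simp
      have e2 : eval z (cyclicCover d F) = c * eval (φ.symm z) (cyclicCover d F') := by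
        rw [← h, φ.apply_symm_apply]
      simp only [e2]
      rw [e1, h, hlv]
      simp only [LinearMap.comp_apply, LinearEquiv.coe_coe]
      ring)
  let ι : (Fin (N + 1) → k) →ₗ[k] (Fin (N + 2) → k) :=
    { toFun := fun x => Fin.snoc (α := fun _ => k) x 0
      map_add' := by
        intro x y
        ext i
        refine Fin.lastCases ?_ (fun j => ?_) i <;> simp
      map_smul' := by
        intro r x
        ext i
        refine Fin.lastCases ?_ (fun j => ?_) i <;> simp }
  have hι : ∀ x, ι x = Fin.snoc (α := fun _ => k) x 0 := fun _ => rfl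
  let π : (Fin (N + 2) → k) →ₗ[k] (Fin (N + 1) → k) := LinearMap.funLeft k k Fin.castSucc
  have hπ : ∀ z, π z = fun i => z (Fin.castSucc i) := fun _ => rfl
  have hx : ∀ x, l (σ (φ (ι x))) = 0 ∧
      eval (σ (φ (ι x))) (cyclicCover d F) = eval (φ (ι x)) (cyclicCover d F) := by
    intro x
    apply hσ
    simp [hl, hι]
  let ψ := π ∘ₗ σ.toLinearMap ∘ₗ φ.toLinearMap ∘ₗ ι
  have hψ : ∀ x, ψ x = fun i => σ (φ (ι x)) (Fin.castSucc i) := fun _ => rfl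
  have hinj : Function.Injective ψ := by
    rw [injective_iff_map_eq_zero]
    intro x h0
    have h1 : σ (φ (ι x)) = 0 := by
      ext i
      refine Fin.lastCases (hx x).1 (fun j => ?_) i
      rw [hψ] at h0
      exact congrFun h0 j
    rw [LinearEquiv.map_eq_zero_iff, LinearEquiv.map_eq_zero_iff] at h1
    ext i
    have := congrFun h1 (Fin.castSucc i)
    simpa [hι] using this
  refine (projEquiv_iff _ _).2 ⟨LinearEquiv.ofInjectiveEndo ψ hinj, c, hc, fun x => ?_⟩
  have h2 := (hx x).2
  have h1 := (hx x).1
  rw [hl] at h1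
  rw [h, eval_cyclicCover, eval_cyclicCover, h1, hι] at h2
  simp only [Fin.snoc_last, Fin.snoc_castSucc, zero_pow hd0] at h2
  rw [LinearEquiv.coe_ofInjectiveEndo, hψ, hι]
  linear_combination -h2

/-- The map `F ↦ x_{n+2}^d − F` sends smooth degree-`d` forms in `x₀, …, x_{n+1}` to smooth
degree-`d` forms in `x₀, …, x_{n+2}`, and descends to a well-defined injective map on the
sets of orbits under the actions of `GL_{n+2}(k) × kˣ` and `GL_{n+3}(k) × kˣ`. -/
theorem cyclic_cover_moduli_map_injective
    {k : Type*} [Field k] [IsAlgClosed k] [CharZero k]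
    (n d : ℕ) (hn : 2 ≤ n) (hd : 2 ≤ d) :
    (∀ F : MvPolynomial (Fin (n + 2)) k, F.IsHomogeneous d → SmoothPoly F →
      (cyclicCover d F).IsHomogeneous d ∧ SmoothPoly (cyclicCover d F)) ∧
    ∃ Φ : Quot (orbitRel k (n + 2) d) → Quot (orbitRel k (n + 3) d),
      Function.Injective Φ ∧
      ∀ (F : SmoothForm k (n + 2) d) (G : SmoothForm k (n + 3) d),
        (G.1 : MvPolynomial (Fin (n + 3)) k) = cyclicCover d F.1 →
        Φ (Quot.mk _ F) = Quot.mk _ G := by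
  refine ⟨fun F h1 h2 => ⟨cyclicCover_homog d F h1, cyclicCover_smooth d hd F h2⟩, ?_⟩
  let f : SmoothForm k (n + 2) d → SmoothForm k (n + 3) d := fun F =>
    ⟨cyclicCover d F.1, cyclicCover_homog d F.1 F.2.1, cyclicCover_smooth d hd F.1 F.2.2⟩
  refine ⟨Quot.map f (fun F G h => cyclicCover_wd d hd F.1 G.1 h), ?_, ?_⟩
  · intro a b
    induction a using Quot.ind with | _ F
    induction b using Quot.ind with | _ G
    intro h
    have h' : Quot.mk (orbitRel k (n + 3) d) (f F) = Quot.mk _ (f G) := h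
    have h2 := (orbitRel_equivalence k (n + 3) d).eqvGen_iff.1 (Quot.eqvGen_exact h')
    exact Quot.sound (cyclicCover_inj d hd F.1 G.1 h2)
  · intro F G h
    have : G = f F := Subtype.ext h
    rw [this]
    rfl
end

section
/- Let k be a field of characteristic 0, let d ≥ 2, and let F₁, F₂ ∈ k[x₀,…,x_{n+1}] be homogeneous polynomials of degree d. Let M ∈ GL_{n+3}(k) be an invertible matrix such that M·e_{n+2} = c·e_{n+2} for some scalar c (where e_{n+2} is the last standard basis vector of k^{n+3}), and suppose that (x_{n+2}^d − F₁)(M·x) = λ·(x_{n+2}^d − F₂)(x) for some λ ∈ kˣ. Then: (i) λ = c^d; (ii) the last row of M vanishes off the diagonal, i.e. M_{n+2,j} = 0 for all 0 ≤ j ≤ n+1, so M is block diagonal; and (iii) the upper-left (n+2)×(n+2) block M' of M is invertible and satisfies F₁(M'·x') = λ·F₂(x'), where x' = (x₀,…,x_{n+1}). In particular F₁ and F₂ are projectively equivalent. -/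
open MvPolynomial

/-- If `M ∈ GL_{n+3}(k)` fixes the last basis vector up to the scalar `c` and carries the
cyclic cover equation `x_{n+2}^d − F₁` to `λ·(x_{n+2}^d − F₂)`, then `λ = c^d`, the last
row of `M` vanishes off the diagonal (so `M` is block diagonal), and the upper-left
`(n+2) × (n+2)` block `M'` is invertible with `F₁(M'·x') = λ·F₂(x')`; in particular
`F₁` and `F₂` are projectively equivalent. -/
theorem block_diagonal_of_fixes_galois_point
    {k : Type*} [Field k] [CharZero k]
    (n d : ℕ) (hd : 2 ≤ d)
    (F₁ F₂ : MvPolynomial (Fin (n + 2)) k)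
    (hF₁ : F₁.IsHomogeneous d) (hF₂ : F₂.IsHomogeneous d)
    (M : GL (Fin (n + 3)) k) (c : k)
    (hc : (M : Matrix (Fin (n + 3)) (Fin (n + 3)) k).mulVec
        (Pi.single (Fin.last (n + 2)) 1 : Fin (n + 3) → k) =
      c • (Pi.single (Fin.last (n + 2)) 1 : Fin (n + 3) → k))
    (lam : kˣ)
    (heq : substMatrix (M : Matrix (Fin (n + 3)) (Fin (n + 3)) k)
        (MvPolynomial.X (Fin.last (n + 2)) ^ d - MvPolynomial.rename Fin.castSucc F₁) =
      (lam : k) •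
        (MvPolynomial.X (Fin.last (n + 2)) ^ d - MvPolynomial.rename Fin.castSucc F₂)) :
    (lam : k) = c ^ d ∧
    (∀ j : Fin (n + 2),
      (M : Matrix (Fin (n + 3)) (Fin (n + 3)) k) (Fin.last (n + 2)) j.castSucc = 0) ∧
    IsUnit ((M : Matrix (Fin (n + 3)) (Fin (n + 3)) k).submatrix
      Fin.castSucc Fin.castSucc) ∧
    substMatrix ((M : Matrix (Fin (n + 3)) (Fin (n + 3)) k).submatrix
      Fin.castSucc Fin.castSucc) F₁ = (lam : k) • F₂ ∧
    ProjectivelyEquivalent F₁ F₂ := by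
  set A : Matrix (Fin (n + 3)) (Fin (n + 3)) k := (M : Matrix (Fin (n + 3)) (Fin (n + 3)) k) with hA
  have hcol : ∀ i : Fin (n + 2), A i.castSucc (Fin.last (n + 2)) = 0 := by
    intro i
    have h := congrFun hc i.castSucc
    simpa [Fin.castSucc_ne_last] using h
  have hcc : A (Fin.last (n + 2)) (Fin.last (n + 2)) = c := by
    have h := congrFun hc (Fin.last (n + 2))
    simpa using h
  set M' := A.submatrix (Fin.castSucc : Fin (n + 2) → Fin (n + 3)) Fin.castSucc with hM'
  have hunit : IsUnit M' := by
    have hmul : A * ((M⁻¹ : GL (Fin (n + 3)) k) : Matrix (Fin (n + 3)) (Fin (n + 3)) k) = 1 := by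
      rw [hA, ← Units.val_mul, mul_inv_cancel, Units.val_one]
    apply IsUnit.of_mul_eq_one (((M⁻¹ : GL (Fin (n + 3)) k) :
      Matrix (Fin (n + 3)) (Fin (n + 3)) k).submatrix Fin.castSucc Fin.castSucc)
    ext i j
    have h := congrFun (congrFun hmul i.castSucc) j.castSucc
    rw [Matrix.mul_apply, Fin.sum_univ_castSucc, hcol, zero_mul, add_zero] at h
    rw [Matrix.mul_apply]
    simpa [hM', Matrix.one_apply] using h
  -- the linear form given by the last row
  set L : MvPolynomial (Fin (n + 2)) k :=
    ∑ j : Fin (n + 2), C (A (Fin.last (n + 2)) j.castSucc) * X j with hL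
  let v : Fin (n + 3) → Polynomial (MvPolynomial (Fin (n + 2)) k) :=
    Fin.lastCases Polynomial.X (fun j => Polynomial.C (X j))
  have hv1 : v (Fin.last (n + 2)) = Polynomial.X := by simp [v]
  have hv2 : ∀ j : Fin (n + 2), v j.castSucc = Polynomial.C (X j) := by intro j; simp [v]
  let Φ : MvPolynomial (Fin (n + 3)) k →ₐ[k] Polynomial (MvPolynomial (Fin (n + 2)) k) := aeval v
  have hΦC : ∀ a : k, Φ (C a) = Polynomial.C (C a) := by
    intro a
    simp only [Φ, aeval_C]
    rfl
  let ι : MvPolynomial (Fin (n + 2)) k →ₐ[k] Polynomial (MvPolynomial (Fin (n + 2)) k) :=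
    Polynomial.CAlgHom
  have hι : ∀ p, ι p = Polynomial.C p := fun p => rfl
  have hΦren : ∀ F : MvPolynomial (Fin (n + 2)) k, Φ (rename Fin.castSucc F) = Polynomial.C F := by
    intro F
    have : (Φ.comp (rename Fin.castSucc)) = ι := by
      apply MvPolynomial.algHom_ext
      intro j
      simp [Φ, hv2, hι]
    exact DFunLike.congr_fun this F
  have hΦsub : ∀ F : MvPolynomial (Fin (n + 2)) k,
      Φ (substMatrix A (rename Fin.castSucc F)) = Polynomial.C (substMatrix M' F) := by
    intro F
    have : (Φ.comp ((aeval (fun i => ∑ j, C (A i j) * X j)).comp (rename Fin.castSucc))) =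
        ι.comp (aeval (fun i => ∑ j, C (M' i j) * X j)) := by
      apply MvPolynomial.algHom_ext
      intro i
      simp only [AlgHom.comp_apply, rename_X, aeval_X, map_sum, map_mul, hι, hΦC]
      rw [Fin.sum_univ_castSucc, hcol]
      simp [Φ, hv2, hM']
    exact DFunLike.congr_fun this F
  have hΦX : Φ (X (Fin.last (n + 2))) = Polynomial.X := by simp [Φ, hv1]
  have hΦlast : Φ (substMatrix A (X (Fin.last (n + 2)))) =
      (Polynomial.X + Polynomial.C L).comp (Polynomial.C (C c) * Polynomial.X) := by
    simp only [substMatrix, aeval_X, map_sum, map_mul, hΦC]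
    rw [Fin.sum_univ_castSucc, hcc]
    simp [Φ, hv1, hv2, hL, add_comm]
  have key := congrArg Φ heq
  have hsub : ∀ P Q : MvPolynomial (Fin (n + 3)) k,
      substMatrix A (P ^ d - Q) = substMatrix A P ^ d - substMatrix A Q := by
    intro P Q
    simp [substMatrix]
  rw [hsub, map_sub, map_pow, hΦlast, hΦsub, smul_eq_C_mul, map_mul, map_sub, map_pow, hΦX,
    hΦC, hΦren, ← Polynomial.pow_comp] at key
  have hco : ∀ m, L ^ (d - m) * (d.choose m : MvPolynomial (Fin (n + 2)) k) * C c ^ m -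
      (if m = 0 then substMatrix M' F₁ else 0) =
      C (lam : k) * ((if m = d then 1 else 0) - (if m = 0 then F₂ else 0)) := by
    intro m
    have h := congrArg (fun p => Polynomial.coeff p m) key
    simpa only [Polynomial.coeff_sub, Polynomial.comp_C_mul_X_coeff, Polynomial.coeff_X_add_C_pow,
      Polynomial.coeff_C_mul, Polynomial.coeff_X_pow, Polynomial.coeff_C] using h
  have hlam : (lam : k) = c ^ d := by
    have h := hco d
    have hd0 : d ≠ 0 := by omega
    simp only [hd0, if_true, if_false, Nat.sub_self, pow_zero, Nat.choose_self, Nat.cast_one,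
      one_mul, sub_zero, mul_one, ← C_pow] at h
    exact (C_injective _ _ h).symm
  have hc0 : c ≠ 0 := by
    rintro rfl
    rw [zero_pow (by omega)] at hlam
    exact lam.ne_zero hlam
  have hL0 : L = 0 := by
    have h := hco (d - 1)
    have h1 : d - 1 ≠ 0 := by omega
    have h2 : d - 1 ≠ d := by omega
    have h3 : d - (d - 1) = 1 := by omega
    have h4 : d.choose (d - 1) ≠ 0 := (Nat.choose_pos (by omega)).ne'
    simp only [h1, h2, h3, if_false, pow_one, sub_zero, mul_zero] at h
    rcases mul_eq_zero.1 h with h | h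
    · rcases mul_eq_zero.1 h with h | h
      · exact h
      · exact absurd (Nat.cast_eq_zero.1 h) h4
    · exact absurd (C_eq_zero.1 (eq_zero_of_pow_eq_zero h)) hc0
  have hF : substMatrix M' F₁ = (lam : k) • F₂ := by
    have h := hco 0
    have hd0 : ¬ (0 = d) := by omega
    have hd1 : d ≠ 0 := by omega
    simp only [hL0, hd0, if_true, if_false, Nat.sub_zero, zero_pow hd1, zero_mul, zero_sub,
      mul_neg, neg_inj] at h
    rw [h, smul_eq_C_mul]
  refine ⟨hlam, ?_, hunit, hF, hunit.unit, lam, hF⟩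
  intro j
  have h := congrArg (coeff (Finsupp.single j 1)) hL0
  rw [hL, coeff_sum] at h
  simpa [coeff_C_mul, coeff_X', Finsupp.single_left_inj] using h
end
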